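/- Let V be a finite set, let 𝒫 and 𝒬 be partitions of V such that 𝒫 refines 𝒬 (every part of 𝒬 is a union of parts of 𝒫). Assume: (i) every part of 𝒫 has at least 2 elements, and every part of 𝒫 of odd cardinality has at least 3 elements; (ii) every part of 𝒬 of even cardinality is either a single even-cardinality part of 𝒫 or the union of exactly two odd-cardinality parts of 𝒫; (iii) every part of 𝒬 of odd cardinality is either the union of exactly one odd-cardinality part and one even-cardinality part of 𝒫, or the union of exactly three odd-cardinality parts of 𝒫. Let o(𝒫) denote the number of odd-cardinality parts of 𝒫, and let o(𝒬) and e(𝒬) denote the numbers of odd- and even-cardinality parts of 𝒬, respectively. Then 2·o(𝒫) + 3·o(𝒬) + 2·e(𝒬) ≤ |V|. (This is Claim 1 in the analysis of the Node-Reduction-Algorithm on r-well-structured point sets, with 𝒫 the components of G_{i−1} and 𝒬 the components of G_i.) -/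

import Mathlib

/-!
The inequality is local to the parts of `Q`. Give a part `q` of `Q` the weight `3` if it is odd
and `2` if it is even, and let `o(q)` be the number of odd parts of `P` inside `q`. Then
`2 * o(q) + weight(q) ≤ |q|` in each of the four allowed shapes:
one even part (`0 + 2 ≤ 2`), two odd parts (`4 + 2 ≤ 3 + 3`),
an odd and an even part (`2 + 3 ≤ 3 + 2`), three odd parts (`6 + 3 ≤ 3 + 3 + 3`).
Summing over `q` gives the theorem, since the parts of `Q` are disjoint subsets of `V`
and, by refinement, every odd part of `P` lies in some part of `Q`.
-/

open scoped BigOperators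

/-- `parts` is a partition of the finite set `V`: a finite family of nonempty subsets
of `V` such that each element of `V` lies in exactly one part. -/
def IsFinsetPartition {α : Type*} (V : Finset α) (parts : Finset (Finset α)) : Prop :=
  (∀ P ∈ parts, P.Nonempty) ∧
  (∀ P ∈ parts, P ⊆ V) ∧
  (∀ v ∈ V, ∃! P, P ∈ parts ∧ v ∈ P)

lemma IsFinsetPartition.eq_of_mem {α : Type*} {V : Finset α} {parts : Finset (Finset α)}
    (h : IsFinsetPartition V parts) {A B : Finset α} (hA : A ∈ parts) (hB : B ∈ parts)
    {v : α} (hvA : v ∈ A) (hvB : v ∈ B) : A = B :=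
  (h.2.2 v (h.2.1 A hA hvA)).unique ⟨hA, hvA⟩ ⟨hB, hvB⟩

lemma IsFinsetPartition.disjoint {α : Type*} {V : Finset α} {parts : Finset (Finset α)}
    (h : IsFinsetPartition V parts) {A B : Finset α} (hA : A ∈ parts) (hB : B ∈ parts)
    (hne : A ≠ B) : Disjoint A B :=
  Finset.disjoint_left.2 fun _ hvA hvB => hne (h.eq_of_mem hA hB hvA hvB)

theorem stmt7 {α : Type*} [DecidableEq α] (V : Finset α)
    (P Q : Finset (Finset α))
    (hP : IsFinsetPartition V P) (hQ : IsFinsetPartition V Q)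
    -- `P` refines `Q`: every part of `Q` is a union of parts of `P`
    (hrefine : ∀ p ∈ P, ∃ q ∈ Q, p ⊆ q)
    -- (i) every part of `P` has at least 2 elements, odd parts at least 3
    (hP2 : ∀ p ∈ P, 2 ≤ p.card)
    (hP3 : ∀ p ∈ P, Odd p.card → 3 ≤ p.card)
    -- (ii) even parts of `Q` are a single even part of `P` or a union of two odd parts of `P`
    (hQeven : ∀ q ∈ Q, Even q.card →
      q ∈ P ∨ ∃ p₁ ∈ P, ∃ p₂ ∈ P, p₁ ≠ p₂ ∧ Odd p₁.card ∧ Odd p₂.card ∧ q = p₁ ∪ p₂)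
    -- (iii) odd parts of `Q` are a union of one odd and one even part of `P`,
    -- or a union of three odd parts of `P`
    (hQodd : ∀ q ∈ Q, Odd q.card →
      (∃ p₁ ∈ P, ∃ p₂ ∈ P, Odd p₁.card ∧ Even p₂.card ∧ q = p₁ ∪ p₂) ∨
      (∃ p₁ ∈ P, ∃ p₂ ∈ P, ∃ p₃ ∈ P, p₁ ≠ p₂ ∧ p₁ ≠ p₃ ∧ p₂ ≠ p₃ ∧
        Odd p₁.card ∧ Odd p₂.card ∧ Odd p₃.card ∧ q = p₁ ∪ p₂ ∪ p₃)) :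
    2 * (P.filter fun p => Odd p.card).card
      + 3 * (Q.filter fun q => Odd q.card).card
      + 2 * (Q.filter fun q => Even q.card).card
      ≤ V.card := by
  classical
  let o : Finset α → Finset (Finset α) := fun q => P.filter fun p => Odd p.card ∧ p ⊆ q
  -- Parts of `P` are disjoint, so any family `S` of them covering `q` contains all those inside `q`.
  have hcover : ∀ (q : Finset α) (S : Finset (Finset α)), S ⊆ P →
      (∀ v ∈ q, ∃ s ∈ S, v ∈ s) → (o q) ⊆ S := by
    intro q S hS hq p hp
    obtain ⟨hpP, -, hpq⟩ := Finset.mem_filter.1 hp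
    obtain ⟨v, hv⟩ := hP.1 p hpP
    obtain ⟨s, hs, hvs⟩ := hq v (hpq hv)
    rwa [hP.eq_of_mem hpP (hS hs) hv hvs]
  have hlocal : ∀ q ∈ Q, 2 * (o q).card + (if Odd q.card then 3 else 2) ≤ q.card := by
    intro q hq
    by_cases hodd : Odd q.card
    · rw [if_pos hodd]
      rcases hQodd q hq hodd with ⟨p₁, h₁, p₂, h₂, o₁, e₂, rfl⟩ |
        ⟨p₁, h₁, p₂, h₂, p₃, h₃, h12, h13, h23, o₁, o₂, o₃, rfl⟩
      · have hne : p₁ ≠ p₂ := by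
          rintro rfl
          exact Nat.not_even_iff_odd.2 o₁ e₂
        have hsub : o (p₁ ∪ p₂) ⊆ {p₁} := by
          intro p hp
          have := hcover (p₁ ∪ p₂) {p₁, p₂} (by simp [Finset.insert_subset_iff, *])
            (by simp) hp
          have hpo := (Finset.mem_filter.1 hp).2.1
          rcases Finset.mem_insert.1 this with rfl | h
          · simp
          · rw [Finset.mem_singleton.1 h] at hpo
            exact absurd e₂ (Nat.not_even_iff_odd.2 hpo)
        have hc := Finset.card_le_card hsub
        rw [Finset.card_singleton] at hc
        rw [Finset.card_union_of_disjoint (hP.disjoint h₁ h₂ hne)]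
        have := hP3 p₁ h₁ o₁
        have := hP2 p₂ h₂
        omega
      · have hc := (Finset.card_le_card (hcover (p₁ ∪ p₂ ∪ p₃) {p₁, p₂, p₃}
          (by simp [Finset.insert_subset_iff, *])
            (by simp))).trans Finset.card_le_three
        rw [Finset.card_union_of_disjoint (Finset.disjoint_union_left.2
          ⟨hP.disjoint h₁ h₃ h13, hP.disjoint h₂ h₃ h23⟩),
          Finset.card_union_of_disjoint (hP.disjoint h₁ h₂ h12)]
        have := hP3 p₁ h₁ o₁
        have := hP3 p₂ h₂ o₂
        have := hP3 p₃ h₃ o₃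
        omega
    · rw [if_neg hodd]
      rcases hQeven q hq (Nat.not_odd_iff_even.1 hodd) with hqP |
        ⟨p₁, h₁, p₂, h₂, h12, o₁, o₂, rfl⟩
      · have hemp : o q = ∅ := by
          refine Finset.eq_empty_of_forall_notMem fun p hp => ?_
          have hpq := hcover q {q} (by simp [*])
            (by simp) hp
          have hpo := (Finset.mem_filter.1 hp).2.1
          rw [Finset.mem_singleton.1 hpq] at hpo
          exact hodd hpo
        rw [hemp, Finset.card_empty]
        have := hP2 q hqP
        omega
      · have hc := (Finset.card_le_card (hcover (p₁ ∪ p₂) {p₁, p₂}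
          (by simp [Finset.insert_subset_iff, *])
            (by simp))).trans Finset.card_le_two
        rw [Finset.card_union_of_disjoint (hP.disjoint h₁ h₂ h12)]
        have := hP3 p₁ h₁ o₁
        have := hP3 p₂ h₂ o₂
        omega
  have hPo : (P.filter fun p => Odd p.card).card ≤ ∑ q ∈ Q, (o q).card := by
    refine (Finset.card_le_card fun p hp => ?_).trans Finset.card_biUnion_le
    obtain ⟨hpP, hpo⟩ := Finset.mem_filter.1 hp
    obtain ⟨q, hq, hpq⟩ := hrefine p hpP
    exact Finset.mem_biUnion.2 ⟨q, hq, Finset.mem_filter.2 ⟨hpP, hpo, hpq⟩⟩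
  have hV : ∑ q ∈ Q, q.card ≤ V.card := by
    have hdisj : (Q : Set (Finset α)).PairwiseDisjoint id :=
      fun a ha b hb hab => hQ.disjoint ha hb hab
    have hcard : (Q.biUnion id).card = ∑ q ∈ Q, q.card := Finset.card_biUnion hdisj
    rw [← hcard]
    exact Finset.card_le_card (Finset.biUnion_subset.2 hQ.2.1)
  have hw : ∑ q ∈ Q, (if Odd q.card then 3 else 2)
      = 3 * (Q.filter fun q => Odd q.card).card + 2 * (Q.filter fun q => Even q.card).card := by
    rw [Finset.sum_ite]
    simp only [Finset.sum_const, smul_eq_mul, Nat.not_odd_iff_even]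
    ring
  have hsum := Finset.sum_le_sum hlocal
  rw [Finset.sum_add_distrib, ← Finset.mul_sum, hw] at hsum
  omega
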